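/- Fix n ≥ 1. Let Q denote the partially ordered set of those nonempty finite subsets of Fin (n+1) that are not equal to the singleton {n} (i.e. {S : Finset (Fin (n+1)) // S.Nonempty ∧ S ≠ {Fin.last n}}), ordered by inclusion and regarded as a category, and let P[n−1] denote the poset category of nonempty finite subsets of Fin n. Then the functor P[n−1] ⥤ Q induced by the inclusion S ↦ S.map Fin.castSucc (viewing a subset of {0,…,n−1} as a subset of {0,…,n}) is an initial functor (CategoryTheory.Functor.Initial); indeed for every S in Q the category of nonempty T ⊆ Fin n with castSucc-image contained in S has a terminal object, namely S with the element n removed. -/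

import Mathlib

open CategoryTheory

/-- The poset of nonempty finite subsets of `Fin m`, ordered by inclusion,
regarded as a category. -/
abbrev NonemptySubsetPoset (m : ℕ) := {S : Finset (Fin m) // S.Nonempty}

/-- The poset of nonempty finite subsets of `Fin (n+1)` other than the
singleton `{n}`, ordered by inclusion, regarded as a category. -/
abbrev NotSingletonTopPoset (n : ℕ) :=
  {S : Finset (Fin (n + 1)) // S.Nonempty ∧ S ≠ {Fin.last n}}

/-- The inclusion `P_ν[n-1] → P_{≠n}`, viewing a subset of `{0,…,n-1}` as a
subset of `{0,…,n}` via `Fin.castSucc`. -/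
def inclMap (n : ℕ) : NonemptySubsetPoset n → NotSingletonTopPoset n :=
  fun S =>
    ⟨S.1.map Fin.castSuccEmb, S.2.map, by
      intro hEq
      obtain ⟨a, ha⟩ := S.2
      have hmem : Fin.castSucc a ∈ S.1.map Fin.castSuccEmb :=
        Finset.mem_map_of_mem _ ha
      rw [hEq, Finset.mem_singleton] at hmem
      exact absurd hmem (Fin.castSucc_lt_last a).ne⟩

theorem inclMap_monotone (n : ℕ) : Monotone (inclMap n) :=
  fun _ _ h => Finset.map_subset_map.mpr h

/-- The inclusion functor `P_ν[n-1] ⥤ P_{≠n}`. -/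
def inclFunctor (n : ℕ) :
    NonemptySubsetPoset n ⥤ NotSingletonTopPoset n :=
  (inclMap_monotone n).functor

/-- The inclusion `P_ν[n-1] ↪ P_{≠n}` is left cofinal (initial); indeed for
every `S` in `P_{≠n}` the costructured arrow category has a terminal object,
namely `S` with the element `n` removed. -/
theorem inclFunctor_initial (n : ℕ) (hn : 1 ≤ n) :
    (inclFunctor n).Initial ∧
      ∀ S : NotSingletonTopPoset n,
        ∃ T : CostructuredArrow (inclFunctor n) S,
          T.left.1.map Fin.castSuccEmb = S.1.erase (Fin.last n) ∧
          Nonempty (Limits.IsTerminal T) := by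
  have key : ∀ S : NotSingletonTopPoset n,
        ∃ T : CostructuredArrow (inclFunctor n) S,
          T.left.1.map Fin.castSuccEmb = S.1.erase (Fin.last n) ∧
          Nonempty (Limits.IsTerminal T) := by
    intro S
    let A : Finset (Fin n) := Finset.univ.filter (fun i => Fin.castSucc i ∈ S.1)
    have hmap : A.map Fin.castSuccEmb = S.1.erase (Fin.last n) := by
      ext x
      induction x using Fin.lastCases with
      | last => simp [A]
      | cast i => simp [A]
    have hA : A.Nonempty := by
      rw [← Finset.map_nonempty (f := Fin.castSuccEmb), hmap, Finset.nonempty_iff_ne_empty]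
      intro h
      rcases (Finset.erase_eq_empty_iff _ _).mp h with h | h
      · exact S.2.1.ne_empty h
      · exact S.2.2 h
    have hle : (inclFunctor n).obj ⟨A, hA⟩ ≤ S := by
      change A.map Fin.castSuccEmb ⊆ S.1
      rw [hmap]
      exact Finset.erase_subset _ _
    let T : CostructuredArrow (inclFunctor n) S :=
      CostructuredArrow.mk (S := inclFunctor n) (Y := (⟨A, hA⟩ : NonemptySubsetPoset n)) (homOfLE hle)
    refine ⟨T, hmap, ⟨Limits.IsTerminal.ofUniqueHom (fun X => ?_) ?_⟩⟩
    · refine CostructuredArrow.homMk (homOfLE ?_) (Subsingleton.elim _ _)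
      change X.left.1 ⊆ A
      intro i hi
      have h : X.left.1.map Fin.castSuccEmb ⊆ S.1 := leOfHom X.hom
      exact Finset.mem_filter.mpr ⟨Finset.mem_univ _, h (Finset.mem_map_of_mem _ hi)⟩
    · intro X m
      exact CostructuredArrow.hom_ext _ _ (Subsingleton.elim _ _)
  refine ⟨⟨fun S => ?_⟩, key⟩
  obtain ⟨T, -, ⟨hT⟩⟩ := key S
  exact isConnected_of_isTerminal _ hT
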